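/- Let F be a field of characteristic p > 0, H a t×n Hankel matrix of indeterminates with 2 ≤ t ≤ n, A = F[x_1,...,x_{n+t-1}], and I = I_t(H). Then there exists a homogeneous polynomial f ∈ I^{(n-t+1)} (the (n-t+1)-st symbolic power) whose initial term with respect to the lexicographic order x_1 > x_2 > ... > x_{n+t-1} is the squarefree monomial x_1 x_2 ··· x_{n+t-1}; consequently f^{p-1} ∈ (I^{[p]} :_A I) but f^{p-1} ∉ m^{[p]}, and hence by Fedder's criterion R = A/I is F-pure. -/

import Mathlib

set_option synthInstance.maxHeartbeats 1000000
set_option maxHeartbeats 1000000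

open MvPolynomial Matrix

/-- The `q`-th Frobenius power of an ideal: the ideal generated by `q`-th powers of its
elements. -/
def frobeniusPower {R : Type*} [CommRing R] (q : ℕ) (I : Ideal R) : Ideal R :=
  Ideal.span ((fun x => x ^ q) '' (I : Set R))

/-!
Write `t = q + 1` and number the variables from `0`. The `t`-minors of the Hankel matrix vanish at
the points `x i = ∑ l, u l * v l ^ i` with `q` summands, the `q`-secants of the rational normal
curve. Conversely, a polynomial vanishing at all these points is zero if no diagonal term of a
`t`-minor divides any of its monomials, so division by the minors shows that `I` is the kernel of
`x i ↦ ∑ l, u l * v l ^ i`. Hence `I` is prime and does not contain the `q`-minor `δ` in the upper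
left corner.

Take for `f` the product of the two Hankel determinants with diagonals `x₀, x₂, x₄, …` and
`x₁, x₃, x₅, …`, and let `K ⊆ I` be generated by the `n - q` minors that border `δ`. Row operations
turn a row of a larger Hankel determinant, multiplied by `δ`, into bordered minors, so that
`δ ^ (n - q) * f ∈ K ^ (n - q)`, and `δ * y ∈ K` for `y ∈ I`. As `K` has `n - q` generators, the
pigeonhole principle puts `(δ ^ (n - q) * f) ^ (p - 1) * (δ * y)` into `I^{[p]}`. The powers of `δ`
can be cancelled, because the polynomial ring is free over itself along `x i ↦ x i ^ p`.
-/

universe u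

/-! ### Secants of the rational normal curve -/

/-- `s` contains the indices of the variables on the diagonal of an `r`-minor of the Hankel matrix
`(x (i + j))`, the one with rows `0, …, r - 1` and columns `g 0 < ⋯ < g (r - 1)`. -/
def HasDiagonal (r : ℕ) (s : Finset ℕ) : Prop :=
  ∃ g : Fin r → ℕ, StrictMono g ∧ ∀ i : Fin r, (i : ℕ) + g i ∈ s

theorem not_hasDiagonal_empty (r : ℕ) : ¬ HasDiagonal (r + 1) ∅ := by
  rintro ⟨g, -, hg⟩
  exact Finset.notMem_empty _ (hg 0)

theorem hasDiagonal_one_iff {s : Finset ℕ} : HasDiagonal 1 s ↔ s.Nonempty := by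
  refine ⟨fun ⟨g, _, hg⟩ => ⟨_, hg 0⟩, fun ⟨a, ha⟩ => ⟨fun _ => a, Subsingleton.strictMono _, ?_⟩⟩
  simpa using ha

theorem HasDiagonal.succ {r M : ℕ} {s t : Finset ℕ} (hs : HasDiagonal r s) (hst : s ⊆ t)
    (hM : M ∈ t) (hlt : ∀ i ∈ s, i + 1 < M) : HasDiagonal (r + 1) t := by
  obtain ⟨g, hg, hgs⟩ := hs
  have hgM (i : Fin r) : g i + r < M := by
    obtain ⟨k, rfl⟩ : ∃ k, r = k + 1 := ⟨r - 1, by have := i.pos; omega⟩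
    have hlast := hlt _ (hgs (Fin.last k))
    have hle := hg.monotone (Fin.le_last i)
    rw [Fin.val_last] at hlast
    omega
  have hrM : r ≤ M := by
    rcases r with _ | k
    · exact M.zero_le
    · have := hgM 0
      omega
  refine ⟨Fin.snoc (α := fun _ => ℕ) g (M - r), ?_, ?_⟩
  · intro i j hij
    induction j using Fin.lastCases with
    | last =>
      obtain ⟨i, rfl⟩ := Fin.exists_castSucc_eq.2 hij.ne
      have := hgM i
      simp only [Fin.snoc_castSucc, Fin.snoc_last]
      omega
    | cast j =>
      obtain ⟨i, rfl⟩ := Fin.exists_castSucc_eq.2 (hij.trans (Fin.castSucc_lt_last j)).ne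
      simpa using hg hij
  · intro i
    induction i using Fin.lastCases with
    | last => simpa [hrM] using hM
    | cast i => simpa using hst (hgs i)

/-- The coordinates of a point on the secant variety of the rational normal curve: a linear
combination, with coefficients `u l`, of the `q` points `(1, v l, v l ^ 2, …)` of the curve. -/
def secantPoint {T : Type*} [CommSemiring T] {q : ℕ} (u v : Fin q → T) (i : ℕ) : T :=
  ∑ l, u l * v l ^ i

theorem secantPoint_cons {T : Type*} [CommSemiring T] {q : ℕ} (a b : T) (u v : Fin q → T) (i : ℕ) :
    secantPoint (Fin.cons a u : Fin (q + 1) → T) (Fin.cons b v : Fin (q + 1) → T) i =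
      a * b ^ i + secantPoint u v i := by
  simp [secantPoint, Fin.sum_univ_succ]

theorem map_secantPoint {S T : Type*} [CommSemiring S] [CommSemiring T] (φ : S →+* T) {q : ℕ}
    (u v : Fin q → S) (i : ℕ) :
    φ (secantPoint u v i) = secantPoint (fun l => φ (u l)) (fun l => φ (v l)) i := by
  simp [secantPoint]

section TopTwoCoeff

variable {R : Type*} [CommRing R]

/-- The coefficient of `x_{K+1} ^ α * x_K ^ γ` in `P`, as a polynomial in `x_0, …, x_{K-1}`. It is
meant for polynomials `P` in the variables `x_0, …, x_{K+1}`: later variables are set to `1`. -/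
noncomputable def topTwoCoeff (P : MvPolynomial ℕ R) (K α γ : ℕ) : MvPolynomial ℕ R :=
  ∑ c ∈ P.support with c (K + 1) = α ∧ c K = γ, monomial (c.filter (· < K)) (coeff c P)

theorem exists_of_mem_support_topTwoCoeff {P : MvPolynomial ℕ R} {K α γ : ℕ} {d : ℕ →₀ ℕ}
    (hd : d ∈ (topTwoCoeff P K α γ).support) :
    ∃ c ∈ P.support, c (K + 1) = α ∧ d = c.filter (· < K) := by
  classical
  obtain ⟨c, hc, hdc⟩ := Finset.mem_biUnion.1 (support_sum hd)
  obtain ⟨hcP, hα, -⟩ := Finset.mem_filter.1 hc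
  exact ⟨c, hcP, hα, Finset.mem_singleton.1 (support_monomial_subset hdc)⟩

theorem coeff_filter_topTwoCoeff {P : MvPolynomial ℕ R} {K : ℕ} {c : ℕ →₀ ℕ}
    (hP : ∀ d ∈ P.support, ∀ i, K + 1 < i → d i = 0) (hc : c ∈ P.support) :
    coeff (c.filter (· < K)) (topTwoCoeff P K (c (K + 1)) (c K)) = coeff c P := by
  classical
  rw [topTwoCoeff, coeff_sum, Finset.sum_eq_single_of_mem c (by simpa using hc), coeff_monomial,
    if_pos rfl]
  intro d hd hdc
  obtain ⟨hdP, htop, hmid⟩ := Finset.mem_filter.1 hd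
  rw [coeff_monomial, if_neg]
  refine fun hlow => hdc (Finsupp.ext fun i => ?_)
  rcases lt_or_ge i K with hi | hi
  · simpa [hi] using DFunLike.congr_fun hlow i
  · obtain rfl | rfl | hi : i = K ∨ i = K + 1 ∨ K + 1 < i := by omega
    · exact hmid
    · exact htop
    · rw [hP d hdP i hi, hP c hc i hi]

theorem aeval_topTwoCoeff {T : Type*} [CommRing T] [Algebra R T] (P : MvPolynomial ℕ R) (K α γ : ℕ)
    (y : ℕ → T) :
    aeval y (topTwoCoeff P K α γ) = ∑ c ∈ P.support with c (K + 1) = α ∧ c K = γ,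
      algebraMap R T (coeff c P) * ∏ i ∈ Finset.range K, y i ^ c i := by
  rw [topTwoCoeff, map_sum]
  refine Finset.sum_congr rfl fun c _ => ?_
  rw [aeval_monomial, Finsupp.prod_of_support_subset (s := Finset.range K) _ _ _ (by simp)]
  · congr 1
    refine Finset.prod_congr rfl fun i hi => ?_
    rw [Finsupp.filter_apply_pos (· < K) c (Finset.mem_range.1 hi)]
  · intro i hi
    simp only [Finsupp.support_filter, Finset.mem_filter] at hi
    exact Finset.mem_range.2 hi.2

end TopTwoCoeff

section SecantVariety

open LaurentPolynomial (T)

variable {R : Type u} [CommRing R]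

theorem aeval_eq_sum_prod_range {S : Type*} [CommRing S] [Algebra R S] {P : MvPolynomial ℕ R}
    {N : ℕ} (hP : ∀ c ∈ P.support, ∀ i, N ≤ i → c i = 0) (y : ℕ → S) :
    aeval y P = ∑ c ∈ P.support, algebraMap R S (coeff c P) * ∏ i ∈ Finset.range N, y i ^ c i := by
  rw [aeval_def, eval₂_eq]
  refine Finset.sum_congr rfl fun c hc => ?_
  congr 1
  refine Finset.prod_subset (fun i hi => ?_) fun i _ hi => ?_
  · by_contra h
    exact Finsupp.mem_support_iff.1 hi (hP c hc i (by simpa using h))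
  · rw [Finsupp.notMem_support_iff.1 hi, pow_zero]

/-- `P(w) * T ^ α` is a polynomial in `T`, and the left hand side is its value at `T = 0`. -/
theorem sum_filter_eq_zero_of_aeval_laurent {S : Type*} [CommRing S] [Algebra R S]
    {P : MvPolynomial ℕ R} {N α : ℕ} (hP : ∀ c ∈ P.support, ∀ i, N + 1 ≤ i → c i = 0)
    (hα : ∀ c ∈ P.support, c N ≤ α) {w : ℕ → LaurentPolynomial S} {a : ℕ → Polynomial S}
    {b : Polynomial S} (ha : ∀ i < N, w i = Polynomial.toLaurent (a i))
    (hb : w N * T 1 = Polynomial.toLaurent b) (h : aeval w P = 0) :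
    ∑ c ∈ P.support with c N = α, algebraMap R S (coeff c P) *
      ((∏ i ∈ Finset.range N, (a i).eval 0 ^ c i) * b.eval 0 ^ α) = 0 := by
  let G : Polynomial S := ∑ c ∈ P.support, Polynomial.C (algebraMap R S (coeff c P)) *
    ((∏ i ∈ Finset.range N, a i ^ c i) * b ^ c N * Polynomial.X ^ (α - c N))
  have hG : G = 0 := by
    apply Polynomial.toLaurent_injective
    rw [map_zero, ← zero_mul (T (α : ℤ)), ← h, aeval_eq_sum_prod_range hP, Finset.sum_mul, map_sum]
    refine Finset.sum_congr rfl fun c hc => ?_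
    have hT : (T (α : ℤ) : LaurentPolynomial S) = T 1 ^ c N * T 1 ^ (α - c N) := by
      rw [← pow_add, Nat.add_sub_cancel' (hα c hc), LaurentPolynomial.T_pow, mul_one]
    have hprod : ∏ i ∈ Finset.range N, w i ^ c i =
        Polynomial.toLaurent (∏ i ∈ Finset.range N, a i ^ c i) := by
      rw [map_prod]
      exact Finset.prod_congr rfl fun i hi => by rw [ha i (Finset.mem_range.1 hi), map_pow]
    have hcoeff : algebraMap R (LaurentPolynomial S) (coeff c P) =
        LaurentPolynomial.C (algebraMap R S (coeff c P)) := rfl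
    rw [Finset.prod_range_succ, hT, hprod, hcoeff]
    simp only [map_mul, map_pow, Polynomial.toLaurent_C, Polynomial.toLaurent_X, ← hb]
    ring
  have hG₀ : G.eval 0 = 0 := by rw [hG, Polynomial.eval_zero]
  refine Eq.trans ?_ hG₀
  rw [Polynomial.eval_finsetSum, Finset.sum_filter]
  refine Finset.sum_congr rfl fun c hc => ?_
  simp only [Polynomial.eval_mul, Polynomial.eval_pow, Polynomial.eval_prod, Polynomial.eval_C,
    Polynomial.eval_X]
  split_ifs with hcα
  · rw [hcα, Nat.sub_self, pow_zero, mul_one]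
  · rw [zero_pow (by have := hα c hc; omega), mul_zero, mul_zero]

theorem secantPoint_cons_laurent {S : Type*} [CommRing S] {q : ℕ} (u v : Fin q → S) (z : S)
    (K i : ℕ) :
    secantPoint (Fin.cons (LaurentPolynomial.C z * T K) fun l => LaurentPolynomial.C (u l))
      (Fin.cons (T (-1)) fun l => LaurentPolynomial.C (v l)) i =
      LaurentPolynomial.C z * T (K - i) + LaurentPolynomial.C (secantPoint u v i) := by
  rw [secantPoint_cons, LaurentPolynomial.T_pow, mul_assoc, ← LaurentPolynomial.T_add,
    ← map_secantPoint]
  simp [sub_eq_add_neg]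

theorem prod_range_succ_eval_zero {S : Type*} [CommSemiring S] (y : ℕ → S) (z : S) (K : ℕ)
    (c : ℕ → ℕ) :
    ∏ i ∈ Finset.range (K + 1),
        (Polynomial.C z * Polynomial.X ^ (K - i) + Polynomial.C (y i)).eval 0 ^ c i =
      (∏ i ∈ Finset.range K, y i ^ c i) * (z + y K) ^ c K := by
  rw [Finset.prod_range_succ]
  congr 1
  · refine Finset.prod_congr rfl fun i hi => ?_
    have hKi : K - i ≠ 0 := by have := Finset.mem_range.1 hi; omega
    simp [hKi]
  · simp

/-- The secant point is moved by the multiple `z * T ^ K * (1, T⁻¹, T⁻², …)` of a further point of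
the curve. Among the coordinates `x_0, …, x_{K+1}` this gives only `x_{K+1}` a pole at `T = 0`. With
`z = X - y_K` the leading terms are independent of `y_K`, and comparing coefficients of `X` isolates
the power `γ` of `x_K`. -/
theorem aeval_secantPoint_topTwoCoeff {q : ℕ} {P : MvPolynomial ℕ R}
    (hP : ∀ (T : Type u) [CommRing T] [Algebra R T] (u v : Fin (q + 1) → T),
      aeval (secantPoint u v) P = 0)
    {K α : ℕ} (hK : ∀ c ∈ P.support, ∀ i, K + 1 < i → c i = 0)
    (hα : ∀ c ∈ P.support, c (K + 1) ≤ α) (γ : ℕ) {S : Type u} [CommRing S] [Algebra R S]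
    (u v : Fin q → S) :
    aeval (secantPoint u v) (topTwoCoeff P K α γ) = 0 := by
  let y (i : ℕ) : S := secantPoint u v i
  let z : Polynomial S := Polynomial.X - Polynomial.C (y K)
  let w (i : ℕ) : LaurentPolynomial (Polynomial S) :=
    LaurentPolynomial.C z * T (K - i) + LaurentPolynomial.C (Polynomial.C (y i))
  have hw : aeval w P = 0 := by
    rw [← hP _ (Fin.cons (LaurentPolynomial.C z * T K)
      fun l => LaurentPolynomial.C (Polynomial.C (u l)))
      (Fin.cons (T (-1)) fun l => LaurentPolynomial.C (Polynomial.C (v l)))]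
    congr 2
    funext i
    rw [secantPoint_cons_laurent, ← map_secantPoint]
  have hsum := sum_filter_eq_zero_of_aeval_laurent (N := K + 1) (α := α) (w := w)
    (a := fun i => Polynomial.C z * Polynomial.X ^ (K - i) + Polynomial.C (Polynomial.C (y i)))
    (b := Polynomial.C z + Polynomial.C (Polynomial.C (y (K + 1))) * Polynomial.X) hK hα
    (fun i hi => by simp [w, Nat.cast_sub (Nat.lt_succ_iff.1 hi)])
    (by
      rw [add_mul, mul_assoc, ← LaurentPolynomial.T_add]
      simp)
    hw
  have hz : (∑ c ∈ P.support with c (K + 1) = α, Polynomial.C (algebraMap R S (coeff c P) *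
      ∏ i ∈ Finset.range K, y i ^ c i) * Polynomial.X ^ c K) * z ^ α = 0 := by
    rw [← hsum, Finset.sum_mul]
    refine Finset.sum_congr rfl fun c _ => ?_
    rw [prod_range_succ_eval_zero fun i => Polynomial.C (y i), sub_add_cancel,
      Polynomial.algebraMap_apply, map_mul, map_prod]
    simp only [Polynomial.eval_add, Polynomial.eval_mul, Polynomial.eval_C, Polynomial.eval_X,
      mul_zero, add_zero, map_pow]
    ring
  have hzero := ((Polynomial.monic_X_sub_C (y K)).pow α).mul_left_eq_zero_iff.1 hz
  rw [aeval_topTwoCoeff, ← Polynomial.coeff_zero γ, ← hzero, Polynomial.finsetSum_coeff,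
    ← Finset.filter_filter, Finset.sum_filter]
  refine Finset.sum_congr rfl fun c _ => ?_
  rw [Polynomial.coeff_C_mul_X_pow]
  simp only [eq_comm, y]

theorem exists_minimal_var_bound (P : MvPolynomial ℕ R) :
    ∃ K, (∀ c ∈ P.support, ∀ i, K + 1 < i → c i = 0) ∧
      (K = 0 ∨ ∃ c ∈ P.support, c (K + 1) ≠ 0) := by
  classical
  let M := P.support.sup fun c => c.support.sup id
  have hle : ∀ c ∈ P.support, ∀ i, c i ≠ 0 → i ≤ M := fun c hc i hi =>
    (Finset.le_sup (f := id) (Finsupp.mem_support_iff.2 hi)).trans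
      (Finset.le_sup (f := fun c : ℕ →₀ ℕ => c.support.sup id) hc)
  have hex : ∃ K, ∀ c ∈ P.support, ∀ i, K + 1 < i → c i = 0 :=
    ⟨M, fun c hc i hi => by_contra fun h => by have := hle c hc i h; omega⟩
  refine ⟨Nat.find hex, Nat.find_spec hex, or_iff_not_imp_left.2 fun hK => ?_⟩
  have hmin := Nat.find_min hex (Nat.sub_one_lt hK)
  push Not at hmin
  obtain ⟨c, hc, i, hi, hci⟩ := hmin
  refine ⟨c, hc, ?_⟩
  have : i ≤ Nat.find hex + 1 := by
    by_contra! h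
    exact hci (Nat.find_spec hex c hc i h)
  rwa [show Nat.find hex + 1 = i by omega]

theorem eq_zero_of_forall_aeval_secantPoint {q : ℕ} {P : MvPolynomial ℕ R}
    (hdiag : ∀ c ∈ P.support, ¬ HasDiagonal (q + 1) c.support)
    (hP : ∀ (T : Type u) [CommRing T] [Algebra R T] (u v : Fin q → T),
      aeval (secantPoint u v) P = 0) : P = 0 := by
  induction q generalizing P with
  | zero =>
    have hzero : ∀ c ∈ P.support, c = 0 := by
      simpa [hasDiagonal_one_iff] using hdiag
    by_contra hne
    have hsupp : P.support = {0} :=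
      Finset.eq_singleton_iff_nonempty_unique_mem.2 ⟨support_nonempty.2 hne, hzero⟩
    have hconst := hP R Fin.elim0 Fin.elim0
    rw [aeval_eq_sum_prod_range (N := 0) fun c hc i _ => by simp [hzero c hc], hsupp] at hconst
    have hmem : (0 : ℕ →₀ ℕ) ∈ P.support := by simp [hsupp]
    exact mem_support_iff.1 hmem (by simpa using hconst)
  | succ q ih =>
    by_contra hne
    obtain ⟨K, hK, hKpos⟩ := exists_minimal_var_bound P
    obtain ⟨c₀, hc₀, hmax⟩ := P.support.exists_max_image (fun c => c (K + 1))
      (support_nonempty.2 hne)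
    have hcoeff : topTwoCoeff P K (c₀ (K + 1)) (c₀ K) = 0 := by
      refine ih (fun d hd hdd => ?_) fun T _ _ u v =>
        aeval_secantPoint_topTwoCoeff hP hK hmax (c₀ K) u v
      obtain ⟨c, hc, hcα, rfl⟩ := exists_of_mem_support_topTwoCoeff hd
      rw [Finsupp.support_filter] at hdd
      rcases hKpos with rfl | ⟨c₁, hc₁, hc₁K⟩
      · exact not_hasDiagonal_empty q (by simpa using hdd)
      · refine hdiag c hc (hdd.succ (Finset.filter_subset _ _) (M := K + 1) ?_ ?_)
        · have := hmax c₁ hc₁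
          rw [Finsupp.mem_support_iff]
          omega
        · intro i hi
          have := (Finset.mem_filter.1 hi).2
          omega
    refine mem_support_iff.1 hc₀ ?_
    rw [← coeff_filter_topTwoCoeff hK hc₀, hcoeff, coeff_zero]

end SecantVariety

/-! ### Hankel minors -/

section HankelMinor

variable {A : Type*} [CommRing A]

/-- The minor of the infinite Hankel matrix `(x (i + j))` with rows `0, …, k - 1` and columns
`g 0, …, g (k - 1)`. -/
def hankelMinor (x : ℕ → A) {k : ℕ} (g : Fin k → ℕ) : A :=
  (of fun i j : Fin k => x (i + g j)).det

/-- The `q`-minor in the upper left corner of the Hankel matrix `(x (i + j))`. -/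
def hankelCorner (x : ℕ → A) (q : ℕ) : A :=
  hankelMinor x fun j : Fin q => (j : ℕ)

/-- The `(q + 1)`-minor of the Hankel matrix `(x (i + j))` that borders `hankelCorner x q` by the
row `q` and the column `j`. -/
def borderedMinor (x : ℕ → A) (q j : ℕ) : A :=
  hankelMinor x (Fin.snoc (fun i : Fin q => (i : ℕ)) j : Fin (q + 1) → ℕ)

/-- The ideal of maximal minors of the `(q + 1) × n` Hankel matrix `(x (i + j))`; repeated and
permuted columns are harmless. -/
def hankelIdeal (x : ℕ → A) (q n : ℕ) : Ideal A :=
  Ideal.span (Set.range fun g : Fin (q + 1) → Fin n => hankelMinor x fun j => (g j : ℕ))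

/-- The ideal generated by the `n - q` maximal minors of the `(q + 1) × n` Hankel matrix
`(x (i + j))` that contain the first `q` columns. -/
def borderedIdeal (x : ℕ → A) (q n : ℕ) : Ideal A :=
  Ideal.span (Set.range fun l : Fin (n - q) => borderedMinor x q (q + l))

theorem map_hankelMinor {B : Type*} [CommRing B] (φ : A →+* B) (x : ℕ → A) {k : ℕ}
    (g : Fin k → ℕ) : φ (hankelMinor x g) = hankelMinor (φ ∘ x) g := by
  rw [hankelMinor, RingHom.map_det]
  rfl

theorem hankelMinor_secantPoint {k : ℕ} (u v : Fin k → A) (g : Fin k → ℕ) :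
    hankelMinor (secantPoint u v) g =
      (vandermonde v).det * (∏ l, u l) * (of fun l j : Fin k => v l ^ g j).det := by
  have hfactor : (of fun i j : Fin k => secantPoint u v (i + g j)) =
      (vandermonde v)ᵀ * (diagonal u * of fun l j : Fin k => v l ^ g j) := by
    ext i j
    simp only [of_apply, secantPoint, mul_apply (M := (vandermonde v)ᵀ), diagonal_mul,
      transpose_apply, vandermonde_apply, pow_add]
    exact Finset.sum_congr rfl fun l _ => by ring
  rw [hankelMinor, hfactor, det_mul, det_mul, det_transpose, det_diagonal, mul_assoc]

theorem hankelMinor_secantPoint_eq_zero {q : ℕ} (u v : Fin q → A) (g : Fin (q + 1) → ℕ) :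
    hankelMinor (secantPoint u v) g = 0 := by
  have hcons : secantPoint u v =
      secantPoint (Fin.cons 0 u : Fin (q + 1) → A) (Fin.cons 0 v : Fin (q + 1) → A) :=
    funext fun i => by rw [secantPoint_cons, zero_mul, zero_add]
  rw [hcons, hankelMinor_secantPoint, Fin.prod_univ_succ, Fin.cons_zero, zero_mul, mul_zero,
    zero_mul]

theorem borderedMinor_eq_zero_of_lt (x : ℕ → A) {q j : ℕ} (hj : j < q) :
    borderedMinor x q j = 0 := by
  refine det_zero_of_column_eq (i := Fin.castSucc ⟨j, hj⟩) (j := Fin.last q)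
    (Fin.castSucc_lt_last _).ne fun i => ?_
  simp only [of_apply, Fin.snoc_castSucc, Fin.snoc_last]

theorem borderedMinor_mem_borderedIdeal (x : ℕ → A) {q n j : ℕ} (hj : j < n) :
    borderedMinor x q j ∈ borderedIdeal x q n := by
  rcases lt_or_ge j q with hjq | hjq
  · rw [borderedMinor_eq_zero_of_lt x hjq]
    exact zero_mem _
  · exact Ideal.subset_span ⟨⟨j - q, by omega⟩, by simp [hjq]⟩

theorem hankelMinor_mem_hankelIdeal (x : ℕ → A) {q n : ℕ} {g : Fin (q + 1) → ℕ}
    (hg : ∀ j, g j < n) : hankelMinor x g ∈ hankelIdeal x q n :=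
  Ideal.subset_span ⟨fun j => ⟨g j, hg j⟩, rfl⟩

theorem borderedMinor_mem_hankelIdeal (x : ℕ → A) {q n j : ℕ} (hqn : q ≤ n) (hj : j < n) :
    borderedMinor x q j ∈ hankelIdeal x q n := by
  refine hankelMinor_mem_hankelIdeal x fun i => ?_
  induction i using Fin.lastCases with
  | last => simpa using hj
  | cast i => simpa using i.2.trans_le hqn

theorem borderedIdeal_le_hankelIdeal (x : ℕ → A) {q n : ℕ} (hqn : q ≤ n) :
    borderedIdeal x q n ≤ hankelIdeal x q n := by
  rw [borderedIdeal, Ideal.span_le]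
  rintro _ ⟨l, rfl⟩
  exact borderedMinor_mem_hankelIdeal x hqn (by omega)

theorem exists_borderedMinor_eq_sum (x : ℕ → A) (q : ℕ) :
    ∃ c : Fin (q + 1) → A, c (Fin.last q) = hankelCorner x q ∧
      ∀ j, borderedMinor x q j = ∑ i, c i * x (i + j) := by
  refine ⟨fun i => (-1) ^ ((i : ℕ) + q) * (of fun a b : Fin q => x (i.succAbove a + b)).det,
    ?_, fun j => ?_⟩
  · simp [← two_mul, hankelCorner, hankelMinor]
  · rw [borderedMinor, hankelMinor, det_succ_column _ (Fin.last q)]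
    refine Finset.sum_congr rfl fun i _ => ?_
    simp only [of_apply, Fin.snoc_last, Fin.val_last, Fin.succAbove_last]
    rw [mul_right_comm]
    congr 3
    ext a b
    simp

/-- The last row is replaced by the combination of the rows `r, …, r + q` that turns its entries
into bordered minors. -/
theorem hankelCorner_mul_hankelMinor (x : ℕ → A) {q r N : ℕ} (hN : r + q = N)
    (g : Fin (N + 1) → ℕ) :
    hankelCorner x q * hankelMinor x g = ∑ j : Fin (N + 1), (-1) ^ (N + (j : ℕ)) *
      borderedMinor x q (r + g j) * hankelMinor x (g ∘ j.succAbove) := by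
  subst hN
  obtain ⟨c, hlast, hc⟩ := exists_borderedMinor_eq_sum x q
  let c' : Fin (r + (q + 1)) → A := Fin.addCases (fun _ => 0) c
  let M : Matrix (Fin (r + q + 1)) (Fin (r + q + 1)) A := of fun i j => x (i + g j)
  have hlast' : c' (Fin.last (r + q)) = hankelCorner x q := by
    rw [← hlast]
    exact Fin.addCases_right (motive := fun _ => A) (Fin.last q)
  have hrow : ∑ k, c' k • M k = fun j => borderedMinor x q (r + g j) := by
    funext j
    rw [hc, Finset.sum_apply]
    refine (Fin.sum_univ_add fun k => (c' k • M k) j).trans ?_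
    simp only [c', M, Pi.smul_apply, smul_eq_mul, Fin.addCases_left, Fin.addCases_right, zero_mul,
      Finset.sum_const_zero, zero_add, of_apply, Fin.val_natAdd]
    exact Finset.sum_congr rfl fun k _ => by rw [add_left_comm, add_assoc]
  have hdet : hankelCorner x q * hankelMinor x g =
      (M.updateRow (Fin.last (r + q)) fun j => borderedMinor x q (r + g j)).det := by
    rw [← hrow, ← hlast']
    exact (det_updateRow_sum M _ c').symm
  rw [hdet, det_succ_row _ (Fin.last (r + q))]
  refine Finset.sum_congr rfl fun j _ => ?_
  rw [submatrix_updateRow_succAbove, updateRow_self]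
  congr 2
  ext a b
  simp [M]

theorem hankelCorner_pow_mul_hankelMinor_mem (x : ℕ → A) {q r k : ℕ} (hk : q + r = k)
    {J : Ideal A} (g : Fin k → ℕ) (hJ : ∀ j, ∀ i < r, borderedMinor x q (i + g j) ∈ J) :
    hankelCorner x q ^ r * hankelMinor x g ∈ J ^ r := by
  subst hk
  induction r with
  | zero => simp
  | succ r ih =>
    rw [pow_succ (hankelCorner x q), mul_assoc, hankelCorner_mul_hankelMinor x (add_comm r q),
      Finset.mul_sum]
    refine Ideal.sum_mem _ fun j _ => ?_
    have hminor := ih (g ∘ j.succAbove) fun k i hi => hJ _ i (hi.trans r.lt_succ_self)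
    have hmem := Ideal.mul_mem_mul hminor (hJ j r r.lt_succ_self)
    rw [pow_succ]
    convert Ideal.mul_mem_left _ ((-1) ^ (q + r + (j : ℕ))) hmem using 1
    ring

theorem hankelCorner_mul_mem_borderedIdeal (x : ℕ → A) {q n : ℕ} {y : A}
    (hy : y ∈ hankelIdeal x q n) : hankelCorner x q * y ∈ borderedIdeal x q n := by
  induction hy using Submodule.span_induction with
  | mem y hy =>
    obtain ⟨g, rfl⟩ := hy
    rw [← pow_one (hankelCorner x q), ← pow_one (borderedIdeal x q n)]
    refine hankelCorner_pow_mul_hankelMinor_mem x rfl (fun j => (g j : ℕ)) fun j i hi => ?_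
    rw [Nat.lt_one_iff.1 hi, zero_add]
    exact borderedMinor_mem_borderedIdeal x (g j).2
  | zero => simp
  | add y z _ _ hy hz => rw [mul_add]; exact add_mem hy hz
  | smul a y _ hy =>
    rw [smul_eq_mul, mul_left_comm]
    exact Ideal.mul_mem_left _ a hy

end HankelMinor

/-! ### Initial terms of minors -/

section DiagonalTerm

theorem det_of_X_eq_sum_monomial {ι σ : Type*} [Fintype ι] [DecidableEq ι] (R : Type*) [CommRing R]
    (v : ι → ι → σ) :
    (of fun i j => (X (v i j) : MvPolynomial σ R)).det =
      ∑ τ : Equiv.Perm ι, monomial (∑ j, Finsupp.single (v (τ j) j) 1) ((τ.sign : ℤ) : R) := by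
  rw [det_apply']
  refine Finset.sum_congr rfl fun τ _ => ?_
  rw [← mul_one ((τ.sign : ℤ) : R), ← C_mul_monomial, monomial_sum_one]
  simp [X]

variable {ι σ : Type*} [Fintype ι] [LinearOrder ι] [LinearOrder σ] {v : ι → ι → σ}

theorem sum_single_perm_lt (hrow : ∀ i, StrictMono (v i)) (hcol : ∀ j, StrictMono fun i => v i j)
    {τ : Equiv.Perm ι} (hτ : τ ≠ 1) :
    toLex (∑ j, Finsupp.single (v (τ j) j) 1 : σ →₀ ℕ) <
      toLex (∑ j, Finsupp.single (v j j) 1 : σ →₀ ℕ) := by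
  obtain ⟨k, hk, hmin⟩ := WellFounded.has_min (wellFounded_lt (α := ι)) {j | τ j ≠ j}
    (by_contra fun h => hτ <| Equiv.ext fun j => by_contra fun hj => h ⟨j, hj⟩)
  have hfix : ∀ j < k, τ j = j := fun j hj => by_contra fun h => hmin j h hj
  have hge : ∀ j, k ≤ j → k ≤ τ j := fun j hj => by
    by_contra! h
    exact hj.not_gt (τ.injective (hfix _ h) ▸ h)
  have hτlt : ∀ j, k ≤ j → v k k < v (τ j) j := fun j hj => by
    rcases hj.eq_or_lt with rfl | hlt
    · exact hcol _ (lt_of_le_of_ne (hge k le_rfl) (Ne.symm hk))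
    · exact (hrow k hlt).trans_le ((hcol j).monotone (hge j hj))
  have hlow : ∀ s ≤ v k k, ∀ j, j ≠ k ∨ s < v k k → (Finsupp.single (v (τ j) j) 1 : σ →₀ ℕ) s =
      (Finsupp.single (v j j) 1 : σ →₀ ℕ) s := by
    intro s hs j hj
    rcases lt_or_ge j k with hjk | hjk
    · rw [hfix j hjk]
    · have hdiag : s < v j j := by
        rcases hj with hj | hj
        · exact hs.trans_lt ((hrow k (hjk.lt_of_ne' hj)).trans_le ((hcol j).monotone hjk))
        · exact hj.trans_le (((hrow k).monotone hjk).trans ((hcol j).monotone hjk))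
      rw [Finsupp.single_eq_of_ne (hs.trans_lt (hτlt j hjk)).ne,
        Finsupp.single_eq_of_ne hdiag.ne]
  refine Finsupp.Lex.lt_iff.2 ⟨v k k, fun s hs => ?_, ?_⟩
  · simp only [ofLex_toLex, Finsupp.finsetSum_apply]
    exact Finset.sum_congr rfl fun j _ => hlow s hs.le j (Or.inr hs)
  · simp only [ofLex_toLex, Finsupp.finsetSum_apply]
    refine Finset.sum_lt_sum (fun j _ => ?_) ⟨k, Finset.mem_univ k, ?_⟩
    · by_cases hj : j = k
      · rw [hj, Finsupp.single_eq_of_ne (hτlt k le_rfl).ne]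
        exact Nat.zero_le _
      · exact (hlow _ le_rfl j (Or.inl hj)).le
    · rw [Finsupp.single_eq_of_ne (hτlt k le_rfl).ne, Finsupp.single_eq_same]
      exact Nat.one_pos

theorem coeff_det_of_X (R : Type*) [CommRing R] (hrow : ∀ i, StrictMono (v i))
    (hcol : ∀ j, StrictMono fun i => v i j) :
    coeff (∑ j, Finsupp.single (v j j) 1)
      (of fun i j => (X (v i j) : MvPolynomial σ R)).det = 1 := by
  classical
  rw [det_of_X_eq_sum_monomial, coeff_sum, Finset.sum_eq_single 1]
  · simp [coeff_monomial]
  · intro τ _ hτ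
    rw [coeff_monomial, if_neg fun h => (sum_single_perm_lt hrow hcol hτ).ne (congr_arg toLex h)]
  · simp

theorem lex_degree_det_of_X [WellFoundedGT σ] (R : Type*) [CommRing R] [Nontrivial R]
    (hrow : ∀ i, StrictMono (v i)) (hcol : ∀ j, StrictMono fun i => v i j) :
    MonomialOrder.lex.degree (of fun i j => (X (v i j) : MvPolynomial σ R)).det =
      ∑ j, Finsupp.single (v j j) 1 := by
  classical
  apply MonomialOrder.lex.toSyn.injective
  refine le_antisymm (MonomialOrder.degree_le_iff.2 fun d hd => ?_)
    (MonomialOrder.le_degree (by simp [coeff_det_of_X R hrow hcol]))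
  rw [det_of_X_eq_sum_monomial] at hd
  obtain ⟨τ, -, hτ⟩ := Finset.mem_biUnion.1 (support_sum hd)
  obtain rfl := Finset.mem_singleton.1 (support_monomial_subset hτ)
  by_cases h : τ = 1
  · simp [h]
  · exact (sum_single_perm_lt hrow hcol h).le

theorem lex_monic_det_of_X [WellFoundedGT σ] (R : Type*) [CommRing R] [Nontrivial R]
    (hrow : ∀ i, StrictMono (v i)) (hcol : ∀ j, StrictMono fun i => v i j) :
    MonomialOrder.lex.Monic (of fun i j => (X (v i j) : MvPolynomial σ R)).det := by
  rw [MonomialOrder.Monic, MonomialOrder.leadingCoeff, lex_degree_det_of_X R hrow hcol,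
    coeff_det_of_X R hrow hcol]

end DiagonalTerm

theorem isHomogeneous_det {ι σ R : Type*} [Fintype ι] [DecidableEq ι] [CommRing R]
    {M : Matrix ι ι (MvPolynomial σ R)} (hM : ∀ i j, (M i j).IsHomogeneous 1) :
    M.det.IsHomogeneous (Fintype.card ι) := by
  rw [det_apply']
  refine IsHomogeneous.sum _ _ _ fun τ _ => ?_
  have hprod := IsHomogeneous.prod Finset.univ (fun j => M (τ j) j) (fun _ => 1)
    fun j _ => hM (τ j) j
  have := (isHomogeneous_C σ ((τ.sign : ℤ) : R)).mul hprod
  simpa using this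

section HankelVar

variable (R : Type*) [CommRing R]

/-- The variables of `R[x_0, …, x_{N-1}]` as a sequence, continued by zero, so that Hankel minors of
them can be written without bounds on the indices. -/
noncomputable def hankelVar (N i : ℕ) : MvPolynomial (Fin N) R :=
  if h : i < N then X ⟨i, h⟩ else 0

theorem hankelVar_of_lt {N i : ℕ} (h : i < N) : hankelVar R N i = X ⟨i, h⟩ :=
  dif_pos h

theorem isHomogeneous_hankelMinor_hankelVar (N : ℕ) {k : ℕ} (g : Fin k → ℕ) :
    (hankelMinor (hankelVar R N) g).IsHomogeneous k := by
  have hentry (i j : Fin k) : ((of fun i j : Fin k => hankelVar R N (i + g j)) i j).IsHomogeneous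
      1 := by
    rw [of_apply, hankelVar]
    split_ifs
    exacts [isHomogeneous_X R _, isHomogeneous_zero _ R 1]
  have hdet := isHomogeneous_det hentry
  rwa [Fintype.card_fin] at hdet

theorem hankelMinor_hankelVar {N k : ℕ} {g : Fin k → ℕ} (hN : ∀ i j : Fin k, i + g j < N) :
    hankelMinor (hankelVar R N) g = (of fun i j => X ⟨i + g j, hN i j⟩).det :=
  congr_arg det (ext fun i j => hankelVar_of_lt R (hN i j))

theorem monic_hankelMinor_hankelVar [Nontrivial R] {N k : ℕ} {g : Fin k → ℕ} (hg : StrictMono g)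
    (hN : ∀ i j : Fin k, i + g j < N) :
    MonomialOrder.lex.Monic (hankelMinor (hankelVar R N) g) := by
  rw [hankelMinor_hankelVar R hN]
  exact lex_monic_det_of_X R (fun i _ _ h => by simpa using hg h) fun j _ _ h => by simpa using h

theorem degree_hankelMinor_hankelVar [Nontrivial R] {N k : ℕ} {g : Fin k → ℕ} (hg : StrictMono g)
    (hN : ∀ i j : Fin k, i + g j < N) :
    MonomialOrder.lex.degree (hankelMinor (hankelVar R N) g) =
      ∑ j : Fin k, Finsupp.single ⟨j + g j, hN j j⟩ 1 := by
  rw [hankelMinor_hankelVar R hN]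
  exact lex_degree_det_of_X R (fun i _ _ h => by simpa using hg h) fun j _ _ h => by simpa using h

end HankelVar

/-! ### Primality of the Hankel ideal -/

section SecantMap

variable (R : Type u) [CommRing R]

/-- The homomorphism `x i ↦ ∑ l, u l * v l ^ i` into a polynomial ring in `u` (left summand) and `v`
(right summand): the parametrization of the secant variety of the rational normal curve. -/
noncomputable def secantMap (q N : ℕ) :
    MvPolynomial (Fin N) R →ₐ[R] MvPolynomial (Fin q ⊕ Fin q) R :=
  aeval fun i => secantPoint (fun l => X (Sum.inl l)) (fun l => X (Sum.inr l)) i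

variable {R}

theorem aeval_sumElim_secantMap {T : Type*} [CommRing T] [Algebra R T] {q N : ℕ} (u v : Fin q → T)
    (f : MvPolynomial (Fin N) R) :
    aeval (Sum.elim u v) (secantMap R q N f) = aeval (fun i : Fin N => secantPoint u v i) f := by
  rw [secantMap, ← AlgHom.comp_apply, comp_aeval]
  congr 2
  funext i
  simpa using map_secantPoint (aeval (R := R) (Sum.elim u v)).toRingHom
    (fun l => X (Sum.inl l)) (fun l => X (Sum.inr l)) i

theorem secantMap_hankelMinor {q N k : ℕ} {g : Fin k → ℕ} (hN : ∀ i j : Fin k, i + g j < N) :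
    secantMap R q N (hankelMinor (hankelVar R N) g) =
      hankelMinor (secantPoint (fun l => X (Sum.inl l)) fun l => X (Sum.inr l)) g := by
  refine (map_hankelMinor (secantMap R q N).toRingHom _ g).trans (congr_arg det (ext fun i j => ?_))
  simp [hankelVar_of_lt R (hN i j), secantMap]

theorem hankelIdeal_le_ker_secantMap (q n : ℕ) :
    hankelIdeal (hankelVar R (n + q)) q n ≤ RingHom.ker (secantMap R q (n + q)) := by
  rw [hankelIdeal, Ideal.span_le]
  rintro _ ⟨g, rfl⟩
  rw [SetLike.mem_coe, RingHom.mem_ker, secantMap_hankelMinor fun i j => by omega,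
    hankelMinor_secantPoint_eq_zero]

theorem sum_single_le_of_injective {ι σ : Type*} [Fintype ι] {v : ι → σ}
    (hv : Function.Injective v) {d : σ →₀ ℕ} (hd : ∀ i, v i ∈ d.support) :
    ∑ i, Finsupp.single (v i) 1 ≤ d := by
  classical
  intro s
  rw [Finsupp.finsetSum_apply]
  by_cases hs : ∃ i, v i = s
  · obtain ⟨i, rfl⟩ := hs
    simpa [Finsupp.single_apply, hv.eq_iff, Nat.one_le_iff_ne_zero] using hd i
  · push Not at hs
    simp [hs]

theorem not_hasDiagonal_of_forall_not_degree_le [Nontrivial R] {q n : ℕ}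
    {d : Fin (n + q) →₀ ℕ} (hd : ∀ g : Fin (q + 1) → ℕ, StrictMono g → (∀ j, g j < n) →
      ¬ MonomialOrder.lex.degree (hankelMinor (hankelVar R (n + q)) g) ≤ d) :
    ¬ HasDiagonal (q + 1) (d.support.map Fin.valEmbedding) := by
  rintro ⟨g, hg, hgd⟩
  have hmem (j : Fin (q + 1)) : ∃ h : (j : ℕ) + g j < n + q, ⟨j + g j, h⟩ ∈ d.support := by
    obtain ⟨s, hs, hsj⟩ := Finset.mem_map.1 (hgd j)
    have h : (j : ℕ) + g j < n + q := hsj ▸ s.2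
    exact ⟨h, (Fin.ext hsj : s = ⟨j + g j, h⟩) ▸ hs⟩
  have hgn (j : Fin (q + 1)) : g j < n := by
    have hlast := (hmem (Fin.last q)).1
    have hle := hg.monotone j.le_last
    rw [Fin.val_last] at hlast
    omega
  have hinj : Function.Injective fun j : Fin (q + 1) => (⟨j + g j, (hmem j).1⟩ : Fin (n + q)) :=
    StrictMono.injective fun i j hij => by
      have := hg hij
      simp only [Fin.mk_lt_mk]
      omega
  refine hd g hg hgn ?_
  rw [degree_hankelMinor_hankelVar R hg fun i j => by have := hgn j; omega]
  exact sum_single_le_of_injective hinj fun j => (hmem j).2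

theorem eq_zero_of_secantMap_eq_zero {q N : ℕ} {f : MvPolynomial (Fin N) R}
    (hdiag : ∀ d ∈ f.support, ¬ HasDiagonal (q + 1) (d.support.map Fin.valEmbedding))
    (hf : secantMap R q N f = 0) : f = 0 := by
  classical
  refine rename_injective _ Fin.val_injective
    ((eq_zero_of_forall_aeval_secantPoint (q := q) ?_ ?_).trans (map_zero _).symm)
  · intro c hc
    rw [support_rename_of_injective Fin.val_injective] at hc
    obtain ⟨d, hd, rfl⟩ := Finset.mem_image.1 hc
    rw [Finsupp.mapDomain_support_of_injective Fin.val_injective]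
    exact Finset.map_eq_image Fin.valEmbedding d.support ▸ hdiag d hd
  · intro T _ _ u v
    rw [aeval_rename]
    exact (aeval_sumElim_secantMap u v f).symm.trans (by rw [hf, map_zero])

theorem hankelIdeal_eq_ker_secantMap [Nontrivial R] (q n : ℕ) :
    hankelIdeal (hankelVar R (n + q)) q n = RingHom.ker (secantMap R q (n + q)) := by
  refine le_antisymm (hankelIdeal_le_ker_secantMap q n) fun f hf => ?_
  let B : Set (MvPolynomial (Fin (n + q)) R) := hankelMinor (hankelVar R (n + q)) ''
    {g : Fin (q + 1) → ℕ | StrictMono g ∧ ∀ j, g j < n}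
  have hB : ∀ b ∈ B, IsUnit (MonomialOrder.lex.leadingCoeff b) := by
    rintro _ ⟨g, ⟨hg, hgn⟩, rfl⟩
    rw [(monic_hankelMinor_hankelVar R hg fun i j => by have := hgn j; omega).leadingCoeff_eq_one]
    exact isUnit_one
  obtain ⟨a, r, rfl, -, hr⟩ := MonomialOrder.lex.div_set hB f
  have hcomb : Finsupp.linearCombination _ (fun b : B => (b : MvPolynomial (Fin (n + q)) R)) a ∈
      hankelIdeal (hankelVar R (n + q)) q n := by
    rw [Finsupp.linearCombination_apply]
    refine Submodule.sum_mem _ fun b _ => Submodule.smul_mem _ _ ?_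
    obtain ⟨g, ⟨-, hgn⟩, hgb⟩ := b.2
    exact hgb ▸ hankelMinor_mem_hankelIdeal _ hgn
  have hker : secantMap R q (n + q) r = 0 :=
    (Ideal.add_mem_iff_right _ (hankelIdeal_le_ker_secantMap q n hcomb)).1 hf
  have hr₀ : r = 0 := eq_zero_of_secantMap_eq_zero (fun d hd =>
    not_hasDiagonal_of_forall_not_degree_le fun g hg hgn => hr d hd _ ⟨g, ⟨hg, hgn⟩, rfl⟩) hker
  rwa [hr₀, add_zero]

theorem isPrime_hankelIdeal [IsDomain R] (q n : ℕ) :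
    (hankelIdeal (hankelVar R (n + q)) q n).IsPrime := by
  rw [hankelIdeal_eq_ker_secantMap]
  exact RingHom.ker_isPrime _

theorem hankelCorner_notMem_hankelIdeal [IsDomain R] {q n : ℕ} (hqn : q ≤ n) :
    hankelCorner (hankelVar R (n + q)) q ∉ hankelIdeal (hankelVar R (n + q)) q n := by
  intro hmem
  have hzero := hankelIdeal_le_ker_secantMap q n hmem
  rw [RingHom.mem_ker, hankelCorner, secantMap_hankelMinor fun i j => by omega,
    hankelMinor_secantPoint] at hzero
  have hV : (vandermonde fun l : Fin q => (X (Sum.inr l) : MvPolynomial (Fin q ⊕ Fin q) R)).det ≠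
      0 := det_vandermonde_ne_zero_iff.2 ((X_injective).comp Sum.inr_injective)
  have hU : ∏ l : Fin q, (X (Sum.inl l) : MvPolynomial (Fin q ⊕ Fin q) R) ≠ 0 :=
    Finset.prod_ne_zero_iff.2 fun l _ => X_ne_zero _
  exact mul_ne_zero (mul_ne_zero hV hU) hV hzero

end SecantMap

/-! ### Frobenius powers -/

section FrobeniusPower

theorem pow_mem_frobeniusPower {A : Type*} [CommRing A] (q : ℕ) {I : Ideal A} {a : A}
    (ha : a ∈ I) : a ^ q ∈ frobeniusPower q I :=
  Ideal.subset_span ⟨a, ha, rfl⟩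

theorem frobeniusPower_span {A : Type*} [CommRing A] (p : ℕ) [ExpChar A p] (s : Set A) :
    frobeniusPower p (Ideal.span s) = Ideal.span ((fun a => a ^ p) '' s) :=
  Ideal.map_span (frobenius A p) s

theorem span_range_pow_le {A ι : Type*} [CommRing A] [Fintype ι] {b : ι → A} {J : Ideal A}
    {k m : ℕ} (hb : ∀ i, b i ^ (k + 1) ∈ J) (hm : Fintype.card ι * k < m) :
    Ideal.span (Set.range b) ^ m ≤ J := by
  classical
  refine (Submodule.span_pow (Set.range b) m).trans_le (Ideal.span_le.2 fun z hz => ?_)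
  obtain ⟨f, rfl⟩ := Set.mem_pow.1 hz
  rw [List.prod_ofFn]
  choose g hg using fun l => (f l).2
  obtain ⟨i, hi⟩ := Fintype.exists_lt_card_fiber_of_mul_lt_card g (n := k) (by simpa using hm)
  have hfiber : ∏ l with g l = i, (f l : A) = b i ^ (Finset.univ.filter (g · = i)).card :=
    Finset.prod_eq_pow_card fun l hl => by rw [← hg l, (Finset.mem_filter.1 hl).2]
  refine J.mem_of_dvd ((pow_dvd_pow (b i) hi).trans ?_) (hb i)
  rw [← hfiber]
  exact Finset.prod_dvd_prod_of_subset _ _ _ (Finset.filter_subset _ _)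

theorem pow_mul_mem_frobeniusPower {A ι : Type*} [CommRing A] [Fintype ι] {q : ℕ} (hq : 0 < q)
    {I : Ideal A} {b : ι → A} (hb : ∀ i, b i ∈ I) {f y : A}
    (hf : f ∈ Ideal.span (Set.range b) ^ Fintype.card ι) (hy : y ∈ Ideal.span (Set.range b)) :
    f ^ (q - 1) * y ∈ frobeniusPower q I := by
  have hmem := Ideal.mul_mem_mul (Ideal.pow_mem_pow hf (q - 1)) hy
  rw [← pow_mul, ← pow_succ] at hmem
  refine span_range_pow_le (k := q - 1) (fun i => ?_) (Nat.lt_succ_self _) hmem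
  rw [Nat.sub_add_cancel hq]
  exact pow_mem_frobeniusPower q (hb i)

theorem pow_notMem_frobeniusPower_of_degree_le_one {σ R : Type*} [CommRing R] [Nontrivial R]
    {p : ℕ} [ExpChar R p] {m : MonomialOrder σ} {f : MvPolynomial σ R} (hf : m.Monic f)
    (hdeg : ∀ i, m.degree f i ≤ 1) :
    f ^ (p - 1) ∉ frobeniusPower p (Ideal.span (Set.range X)) := by
  have hp := expChar_pos R p
  have hX : (fun a => a ^ p) '' Set.range (X : σ → MvPolynomial σ R) =
      (fun d => monomial d (1 : R)) '' Set.range fun i => Finsupp.single i p := by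
    simp only [← Set.range_comp, Function.comp_def, X_pow_eq_monomial]
  rw [frobeniusPower_span, hX, mem_ideal_span_monomial_image]
  intro h
  have hcoeff : m.degree (f ^ (p - 1)) ∈ (f ^ (p - 1)).support :=
    m.degree_mem_support (hf.pow.ne_zero)
  obtain ⟨_, ⟨i, rfl⟩, hi⟩ := h _ hcoeff
  have hpow : m.degree (f ^ (p - 1)) = (p - 1) • m.degree f :=
    m.degree_pow_of_pow_leadingCoeff_ne_zero (by simp [hf.leadingCoeff_eq_one])
  have hip : p ≤ (p - 1) * m.degree f i := by simpa [hpow] using hi i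
  have := hip.trans (Nat.mul_le_mul_left (p - 1) (hdeg i))
  omega

end FrobeniusPower

section ExpandCoeff

variable {σ R : Type*} [CommRing R]

open Classical in
/-- The polynomial ring is a free module over itself along `expand p`, with the monomials whose
exponents are below `p` as a basis. This is the coordinate at the basis monomial of exponent `e`;
for all other `e` it is zero. -/
noncomputable def expandCoeff (p : ℕ) (e : σ →₀ ℕ) : MvPolynomial σ R →ₗ[R] MvPolynomial σ R :=
  (basisMonomials σ R).constr R fun c => if c.mapRange (· % p) (Nat.zero_mod p) = e then
    monomial (c.mapRange (· / p) (Nat.zero_div p)) 1 else 0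

open Classical in
theorem expandCoeff_monomial (p : ℕ) (e c : σ →₀ ℕ) (r : R) :
    expandCoeff p e (monomial c r) = if c.mapRange (· % p) (Nat.zero_mod p) = e then
      monomial (c.mapRange (· / p) (Nat.zero_div p)) r else 0 := by
  have hc : monomial c r = r • basisMonomials σ R c := by simp [smul_monomial]
  rw [hc, map_smul, expandCoeff, Module.Basis.constr_basis]
  split_ifs <;> simp [smul_monomial]

theorem expandCoeff_expand_mul {p : ℕ} (hp : 0 < p) (e : σ →₀ ℕ) (a b : MvPolynomial σ R) :
    expandCoeff p e (expand p a * b) = a * expandCoeff p e b := by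
  induction a using MvPolynomial.induction_on' with
  | add a₁ a₂ h₁ h₂ => rw [map_add, add_mul, map_add, h₁, h₂, add_mul]
  | monomial c r =>
    induction b using MvPolynomial.induction_on' with
    | add b₁ b₂ h₁ h₂ => rw [mul_add, map_add, map_add, h₁, h₂, mul_add]
    | monomial d s =>
      have hmod : (p • c + d).mapRange (· % p) (Nat.zero_mod p) =
          d.mapRange (· % p) (Nat.zero_mod p) := by
        ext i
        simp
      have hdiv : (p • c + d).mapRange (· / p) (Nat.zero_div p) =
          c + d.mapRange (· / p) (Nat.zero_div p) := by
        ext i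
        simp [Nat.mul_add_div hp]
      rw [expand_monomial, monomial_mul, expandCoeff_monomial, expandCoeff_monomial, hmod, hdiv]
      split_ifs
      · rw [monomial_mul]
      · rw [mul_zero]

theorem exists_sum_monomial_mul_expand_expandCoeff (p : ℕ) (w : MvPolynomial σ R) :
    ∃ E : Finset (σ →₀ ℕ), ∑ e ∈ E, monomial e 1 * expand p (expandCoeff p e w) = w := by
  classical
  refine ⟨w.support.image fun c => c.mapRange (· % p) (Nat.zero_mod p), ?_⟩
  have hsum (e : σ →₀ ℕ) :
      expandCoeff p e w = ∑ c ∈ w.support, expandCoeff p e (monomial c (coeff c w)) := by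
    rw [← map_sum, ← w.as_sum]
  conv_rhs => rw [w.as_sum]
  simp only [hsum, map_sum, Finset.mul_sum]
  rw [Finset.sum_comm]
  refine Finset.sum_congr rfl fun c hc => ?_
  rw [Finset.sum_eq_single_of_mem _ (Finset.mem_image_of_mem _ hc)]
  · rw [expandCoeff_monomial, if_pos rfl, expand_monomial, monomial_mul, one_mul]
    congr 2
    ext i
    simp [Nat.mod_add_div]
  · intro e _ he
    rw [expandCoeff_monomial, if_neg he.symm, map_zero, mul_zero]

theorem mem_map_expand_iff {p : ℕ} (hp : 0 < p) {I : Ideal (MvPolynomial σ R)}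
    {w : MvPolynomial σ R} : w ∈ I.map (expand p) ↔ ∀ e, expandCoeff p e w ∈ I := by
  refine ⟨fun hw e => ?_, fun hw => ?_⟩
  · induction hw using Submodule.closure_induction with
    | zero => simp
    | add a b _ _ ha hb => simpa only [map_add] using add_mem ha hb
    | smul_mem r x hx =>
      obtain ⟨a, ha, rfl⟩ := hx
      rw [smul_eq_mul, mul_comm, expandCoeff_expand_mul hp]
      exact I.mul_mem_right _ ha
  · obtain ⟨E, hE⟩ := exists_sum_monomial_mul_expand_expandCoeff p w
    rw [← hE]
    exact Ideal.sum_mem _ fun e _ => Ideal.mul_mem_left _ _ (Ideal.mem_map_of_mem _ (hw e))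

theorem mem_map_expand_of_pow_mul_mem {p : ℕ} (hp : 0 < p) {I : Ideal (MvPolynomial σ R)}
    [hI : I.IsPrime] {s w : MvPolynomial σ R} (hs : s ∉ I) (hsp : expand p s = s ^ p) {m : ℕ}
    (hw : s ^ m * w ∈ I.map (expand p)) : w ∈ I.map (expand p) := by
  have hexpand : expand p (s ^ m) * w ∈ I.map (expand p) := by
    rw [map_pow, hsp, ← pow_mul, ← Nat.sub_add_cancel (Nat.le_mul_of_pos_left m hp), pow_add,
      mul_assoc]
    exact Ideal.mul_mem_left _ _ hw
  rw [mem_map_expand_iff hp] at hexpand ⊢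
  intro e
  have he := hexpand e
  rw [expandCoeff_expand_mul hp] at he
  exact (hI.mem_or_mem he).resolve_left fun h => hs (hI.mem_of_pow_mem m h)

end ExpandCoeff

/-! ### The Fedder element -/

section FedderElement

/-- The product of the two Hankel determinants with diagonals `x 0, x 2, x 4, …` and
`x 1, x 3, x 5, …`, whose diagonal terms multiply to `x 0 * ⋯ * x (N - 1)`. -/
def fedderElement {A : Type*} [CommRing A] (x : ℕ → A) (N : ℕ) : A :=
  hankelMinor x (fun j : Fin ((N + 1) / 2) => (j : ℕ)) *
    hankelMinor x fun j : Fin (N / 2) => 1 + (j : ℕ)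

theorem hankelCorner_pow_mul_fedderElement_mem {A : Type*} [CommRing A] (x : ℕ → A) {q n : ℕ}
    (hqn : q ≤ n) :
    hankelCorner x q ^ (n - q) * fedderElement x (n + q) ∈ borderedIdeal x q n ^ (n - q) := by
  let r₁ := (n + q + 1) / 2 - q
  let r₂ := (n + q) / 2 - q
  have h₁ : hankelCorner x q ^ r₁ * hankelMinor x (fun j : Fin ((n + q + 1) / 2) => (j : ℕ)) ∈
      borderedIdeal x q n ^ r₁ :=
    hankelCorner_pow_mul_hankelMinor_mem x (by omega) _ fun j i hi =>
      borderedMinor_mem_borderedIdeal x (by omega)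
  have h₂ : hankelCorner x q ^ r₂ * hankelMinor x (fun j : Fin ((n + q) / 2) => 1 + (j : ℕ)) ∈
      borderedIdeal x q n ^ r₂ :=
    hankelCorner_pow_mul_hankelMinor_mem x (by omega) _ fun j i hi =>
      borderedMinor_mem_borderedIdeal x (by omega)
  have hr : n - q = r₁ + r₂ := by omega
  have hmul := Ideal.mul_mem_mul h₁ h₂
  rwa [mul_mul_mul_comm, ← pow_add, ← pow_add, ← hr] at hmul

variable (R : Type*) [CommRing R]

theorem isHomogeneous_fedderElement (N : ℕ) :
    (fedderElement (hankelVar R N) N).IsHomogeneous N := by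
  have hmul := (isHomogeneous_hankelMinor_hankelVar R N fun j : Fin ((N + 1) / 2) => (j : ℕ)).mul
    (isHomogeneous_hankelMinor_hankelVar R N fun j : Fin (N / 2) => 1 + (j : ℕ))
  rwa [show (N + 1) / 2 + N / 2 = N by omega] at hmul

theorem monic_fedderElement [Nontrivial R] (N : ℕ) :
    MonomialOrder.lex.Monic (fedderElement (hankelVar R N) N) :=
  (monic_hankelMinor_hankelVar R (fun _ _ h => h) fun i j => by omega).mul
    (monic_hankelMinor_hankelVar R (fun _ _ h => Nat.add_lt_add_left h 1) fun i j => by omega)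

theorem sum_even_add_sum_odd {M : Type*} [AddCommMonoid M] {N : ℕ} (a : Fin N → M) :
    ∑ j : Fin ((N + 1) / 2), a ⟨j + j, by omega⟩ + ∑ j : Fin (N / 2), a ⟨j + (1 + j), by omega⟩ =
      ∑ i, a i := by
  let e : Fin ((N + 1) / 2) ⊕ Fin (N / 2) → Fin N :=
    Sum.elim (fun j => ⟨j + j, by omega⟩) fun j => ⟨j + (1 + j), by omega⟩
  suffices he : Function.Bijective e from
    (Fintype.sum_sum_type (a ∘ e)).symm.trans (he.sum_comp a)
  refine (Fintype.bijective_iff_injective_and_card e).2 ⟨?_, ?_⟩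
  · refine Function.Injective.sumElim (fun i j h => ?_) (fun i j h => ?_) fun i j h => ?_ <;>
      have := Fin.mk.inj h <;> omega
  · simp only [Fintype.card_sum, Fintype.card_fin]
    omega

theorem degree_fedderElement [Nontrivial R] (N : ℕ) :
    MonomialOrder.lex.degree (fedderElement (hankelVar R N) N) = ∑ i, Finsupp.single i 1 := by
  have h₁ : StrictMono fun j : Fin ((N + 1) / 2) => (j : ℕ) := fun _ _ h => h
  have h₂ : StrictMono fun j : Fin (N / 2) => 1 + (j : ℕ) := fun _ _ h => Nat.add_lt_add_left h 1
  have hN₁ (i j : Fin ((N + 1) / 2)) : (i : ℕ) + j < N := by omega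
  have hN₂ (i j : Fin (N / 2)) : (i : ℕ) + (1 + j) < N := by omega
  rw [fedderElement, MonomialOrder.degree_mul_of_mul_leadingCoeff_ne_zero,
    degree_hankelMinor_hankelVar R h₁ hN₁, degree_hankelMinor_hankelVar R h₂ hN₂]
  · exact sum_even_add_sum_odd fun i => Finsupp.single i 1
  · rw [(monic_hankelMinor_hankelVar R h₁ hN₁).leadingCoeff_eq_one,
      (monic_hankelMinor_hankelVar R h₂ hN₂).leadingCoeff_eq_one, one_mul]
    exact one_ne_zero

theorem expand_hankelMinor_hankelVar (p : ℕ) [ExpChar R p] (N : ℕ) {k : ℕ} (g : Fin k → ℕ) :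
    expand p (hankelMinor (hankelVar R N) g) = hankelMinor (hankelVar R N) g ^ p := by
  have hvar : (expand p).toRingHom ∘ hankelVar R N =
      frobenius (MvPolynomial (Fin N) R) p ∘ hankelVar R N := by
    funext i
    by_cases hi : i < N
    · simp [hankelVar_of_lt R hi, frobenius_def]
    · simp [hankelVar, hi]
  have hexpand := map_hankelMinor (expand p).toRingHom (hankelVar R N) g
  rw [hvar, ← map_hankelMinor] at hexpand
  exact hexpand

theorem frobeniusPower_hankelIdeal (p : ℕ) [ExpChar R p] (N q n : ℕ) :
    frobeniusPower p (hankelIdeal (hankelVar R N) q n) =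
      (hankelIdeal (hankelVar R N) q n).map (expand p) := by
  rw [hankelIdeal, frobeniusPower_span, Ideal.map_span, ← Set.range_comp, ← Set.range_comp]
  congr 2
  funext g
  exact (expand_hankelMinor_hankelVar R p N _).symm

theorem fedderElement_pow_mul_mem_frobeniusPower [IsDomain R] (p : ℕ) [ExpChar R p] {q n : ℕ}
    (hqn : q ≤ n) {y : MvPolynomial (Fin (n + q)) R}
    (hy : y ∈ hankelIdeal (hankelVar R (n + q)) q n) :
    fedderElement (hankelVar R (n + q)) (n + q) ^ (p - 1) * y ∈
      frobeniusPower p (hankelIdeal (hankelVar R (n + q)) q n) := by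
  have := isPrime_hankelIdeal (R := R) q n
  have hbordered (l : Fin (n - q)) : borderedMinor (hankelVar R (n + q)) q (q + l) ∈
      hankelIdeal (hankelVar R (n + q)) q n :=
    borderedMinor_mem_hankelIdeal _ hqn (by omega)
  have hf := hankelCorner_pow_mul_fedderElement_mem (hankelVar R (n + q)) hqn
  have hmul := pow_mul_mem_frobeniusPower (expChar_pos R p) hbordered
    (by rwa [Fintype.card_fin]) (hankelCorner_mul_mem_borderedIdeal _ hy)
  rw [mul_pow, ← pow_mul, mul_mul_mul_comm, ← pow_succ] at hmul
  rw [frobeniusPower_hankelIdeal] at hmul ⊢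
  exact mem_map_expand_of_pow_mul_mem (expChar_pos R p) (hankelCorner_notMem_hankelIdeal hqn)
    (expand_hankelMinor_hankelVar R p _ _) hmul

end FedderElement

theorem span_det_submatrix_eq_hankelIdeal {R : Type*} [CommRing R] {q n : ℕ}
    {H : Matrix (Fin (q + 1)) (Fin n) (MvPolynomial (Fin (n + q)) R)}
    (hH : ∀ a b, H a b = X ⟨(a : ℕ) + (b : ℕ), by omega⟩) :
    Ideal.span (Set.range fun g : Fin (q + 1) → Fin n => (H.submatrix id g).det) =
      hankelIdeal (hankelVar R (n + q)) q n := by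
  rw [hankelIdeal]
  congr 2
  funext g
  rw [hankelMinor_hankelVar R fun i j => by omega]
  exact congr_arg det (ext fun i j => hH i (g j))

theorem hankel_fedder_element_general (R : Type*) [CommRing R] [IsDomain R] (p t n : ℕ)
    [CharP R p] (hp : p.Prime) (ht : 0 < t) (htn : t ≤ n)
    (H : Matrix (Fin t) (Fin n) (MvPolynomial (Fin (n + t - 1)) R))
    (hH : ∀ a b, H a b = X ⟨(a : ℕ) + (b : ℕ), by omega⟩)
    (I : Ideal (MvPolynomial (Fin (n + t - 1)) R))
    (hI : I = Ideal.span (Set.range fun g : Fin t → Fin n => (H.submatrix id g).det))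
    (m : Ideal (MvPolynomial (Fin (n + t - 1)) R))
    (hm : m = Ideal.span (Set.range X))
    (D : Fin (n + t - 1) →₀ ℕ) (hD : D = ∑ i : Fin (n + t - 1), Finsupp.single i 1) :
    ∃ f : MvPolynomial (Fin (n + t - 1)) R,
      f.IsHomogeneous (n + t - 1) ∧
      (∃ s ∉ I, s * f ∈ I ^ (n - t + 1)) ∧
      coeff D f = 1 ∧
      (∀ d ∈ f.support, d ≠ D → toLex d < toLex D) ∧
      (∀ y ∈ I, f ^ (p - 1) * y ∈ frobeniusPower p I) ∧
      f ^ (p - 1) ∉ frobeniusPower p m := by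
  obtain ⟨q, rfl⟩ : ∃ q, t = q + 1 := ⟨t - 1, by omega⟩
  have hqn : q ≤ n := by omega
  have : ExpChar R p := .prime hp
  have hdeg := degree_fedderElement R (n + q)
  have hmonic := monic_fedderElement R (n + q)
  have hprime := isPrime_hankelIdeal (R := R) q n
  obtain rfl : I = hankelIdeal (hankelVar R (n + q)) q n :=
    hI.trans (span_det_submatrix_eq_hankelIdeal hH)
  subst hm hD
  refine ⟨fedderElement (hankelVar R (n + q)) (n + q), isHomogeneous_fedderElement R (n + q),
    ⟨hankelCorner (hankelVar R (n + q)) q ^ (n - q),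
      fun hmem => hankelCorner_notMem_hankelIdeal hqn (hprime.mem_of_pow_mem _ hmem), ?_⟩,
    ?_, fun d hd hne => ?_, fun y hy => fedderElement_pow_mul_mem_frobeniusPower R p hqn hy,
    pow_notMem_frobeniusPower_of_degree_le_one hmonic fun i => ?_⟩
  · rw [show n - (q + 1) + 1 = n - q by omega]
    exact Ideal.pow_right_mono (borderedIdeal_le_hankelIdeal _ hqn) _
      (hankelCorner_pow_mul_fedderElement_mem _ hqn)
  · exact hdeg ▸ hmonic
  · exact lt_of_le_of_ne (hdeg ▸ MonomialOrder.lex.le_degree hd) fun h => hne (toLex.injective h)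
  · rw [hdeg]
    simp [Finsupp.finsetSum_apply, Finsupp.single_apply]

/-- Fedder's criterion setup for the Hankel determinantal ring: there is a homogeneous `f` in
the symbolic power `I^{(n-t+1)}` (i.e. `s·f ∈ I^{n-t+1}` for some `s ∉ I`) whose lex-initial
term (for `x_1 > x_2 > ... > x_{n+t-1}`) is the squarefree monomial `x_1 x_2 ··· x_{n+t-1}`;
consequently `f^{p-1} ∈ (I^{[p]} :_A I)` but `f^{p-1} ∉ m^{[p]}`, whence `A/I` is `F`-pure. -/
theorem hankel_fedder_element (F : Type*) [Field F] (p t n : ℕ) [CharP F p]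
    (hp : p.Prime) (ht : 2 ≤ t) (htn : t ≤ n)
    (H : Matrix (Fin t) (Fin n) (MvPolynomial (Fin (n + t - 1)) F))
    (hH : ∀ a b, H a b = X ⟨(a : ℕ) + (b : ℕ), by have := a.2; have := b.2; omega⟩)
    (I : Ideal (MvPolynomial (Fin (n + t - 1)) F))
    (hI : I = Ideal.span (Set.range fun g : Fin t → Fin n => (H.submatrix id g).det))
    (m : Ideal (MvPolynomial (Fin (n + t - 1)) F))
    (hm : m = Ideal.span (Set.range X))
    (D : Fin (n + t - 1) →₀ ℕ) (hD : D = ∑ i : Fin (n + t - 1), Finsupp.single i 1) :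
    ∃ f : MvPolynomial (Fin (n + t - 1)) F,
      f.IsHomogeneous (n + t - 1) ∧
      (∃ s ∉ I, s * f ∈ I ^ (n - t + 1)) ∧
      coeff D f = 1 ∧
      (∀ d ∈ f.support, d ≠ D → toLex d < toLex D) ∧
      (∀ y ∈ I, f ^ (p - 1) * y ∈ frobeniusPower p I) ∧
      f ^ (p - 1) ∉ frobeniusPower p m :=
  hankel_fedder_element_general F p t n hp (by omega) htn H hH I hI m hm D hD
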